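/- Let Σ be a closed convex hypersurface in ℝ^d bounding a smooth convex body. Then the Minkowski deficit satisfies (1/|𝕊^{d−1}|)(∫_Σ H_{d−2} dS)² − ∫_Σ H_{d−3} dS ≤ ((d−1)/(d+1)) [ ∫_Σ (H_{d−2})²/H_{d−1} dS − (1/|𝕊^{d−1}|)(∫_Σ H_{d−2} dS)² ], where H_k is the normalized k-th mean curvature of Σ and |𝕊^{d−1}| is the area of the unit sphere in ℝ^d. -/

import Mathlib

open MeasureTheory Real
open scoped RealInnerProductSpace Pointwise

noncomputable section

/-- The surface (area) measure on the unit sphere `𝕊^{d-1} ⊂ ℝ^d`. -/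
def sphMeasure (d : ℕ) : Measure (Metric.sphere (0 : EuclideanSpace ℝ (Fin d)) 1) :=
  (volume : Measure (EuclideanSpace ℝ (Fin d))).toSphere

/-- The degree-zero homogeneous extension of a function on the unit sphere to `ℝ^d`
(extended by `0` at the origin). -/
def ext0 {d : ℕ} (F : Metric.sphere (0 : EuclideanSpace ℝ (Fin d)) 1 → ℝ)
    (x : EuclideanSpace ℝ (Fin d)) : ℝ :=
  letI := Classical.dec (x = 0)
  if hx : x = 0 then 0
  else F ⟨‖x‖⁻¹ • x, by
    simp [mem_sphere_zero_iff_norm, norm_smul, abs_of_nonneg, inv_mul_cancel₀,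
      norm_ne_zero_iff.mpr hx]⟩

/-- The Euclidean Laplacian of `f : ℝ^d → ℝ`. -/
def eucLap {d : ℕ} (f : EuclideanSpace ℝ (Fin d) → ℝ) (x : EuclideanSpace ℝ (Fin d)) : ℝ :=
  ∑ i, fderiv ℝ (fun y => fderiv ℝ f y (EuclideanSpace.single i 1)) x (EuclideanSpace.single i 1)

/-- The Laplace–Beltrami operator (spherical Laplacian) on the unit sphere `𝕊^{d-1}`:
for `F : 𝕊^{d-1} → ℝ`, `sphLap F` is the restriction to the sphere of the Euclidean
Laplacian of the degree-zero homogeneous extension of `F`.  (This is the standard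
characterization of the spherical Laplacian.) -/
def sphLap {d : ℕ} (F : Metric.sphere (0 : EuclideanSpace ℝ (Fin d)) 1 → ℝ) :
    Metric.sphere (0 : EuclideanSpace ℝ (Fin d)) 1 → ℝ :=
  fun θ => eucLap (ext0 F) θ.val

/-- A function on the unit sphere is smooth iff its degree-zero homogeneous extension is
smooth away from the origin. -/
def SphSmooth {d : ℕ} (F : Metric.sphere (0 : EuclideanSpace ℝ (Fin d)) 1 → ℝ) : Prop :=
  ContDiffOn ℝ (⊤ : ℕ∞) (ext0 F) {(0 : EuclideanSpace ℝ (Fin d))}ᶜ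

/-- The support function of a convex body `K ⊆ ℝ^d`, as a (1-homogeneous) function on `ℝ^d`:
`h_K(x) = sup_{y ∈ K} ⟨y, x⟩`. -/
def suppFn {d : ℕ} (K : ConvexBody (EuclideanSpace ℝ (Fin d)))
    (x : EuclideanSpace ℝ (Fin d)) : ℝ :=
  sSup ((fun y => ⟪y, x⟫) '' (K : Set (EuclideanSpace ℝ (Fin d))))

/-- The support function of `K`, restricted to the unit sphere. -/
def suppS {d : ℕ} (K : ConvexBody (EuclideanSpace ℝ (Fin d))) :
    Metric.sphere (0 : EuclideanSpace ℝ (Fin d)) 1 → ℝ :=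
  fun θ => suppFn K θ.val

/-- `K` is a smooth convex body: it has nonempty interior and its support function is
smooth away from the origin (equivalently, its boundary `Σ = ∂K` is a smooth closed
convex hypersurface). -/
def SmoothBody {d : ℕ} (K : ConvexBody (EuclideanSpace ℝ (Fin d))) : Prop :=
  (interior (K : Set (EuclideanSpace ℝ (Fin d)))).Nonempty ∧
    ContDiffOn ℝ (⊤ : ℕ∞) (suppFn K) {(0 : EuclideanSpace ℝ (Fin d))}ᶜ

/-- The area `|𝕊^{d-1}|` of the unit sphere in `ℝ^d`. -/
def sphArea (d : ℕ) : ℝ := (sphMeasure d Set.univ).toReal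

/-- The total (normalized) `(d-2)`-nd mean curvature `∫_Σ H_{d-2} dS` of `Σ = ∂K`,
expressed via the support function: `∫_Σ H_{d-2} dS = ∫_{𝕊^{d-1}} h dθ`. -/
def intH2 {d : ℕ} (K : ConvexBody (EuclideanSpace ℝ (Fin d))) : ℝ :=
  ∫ θ, suppS K θ ∂(sphMeasure d)

/-- The total (normalized) `(d-3)`-rd mean curvature `∫_Σ H_{d-3} dS` of `Σ = ∂K`,
expressed via the support function:
`∫_Σ H_{d-3} dS = (1/(d-1)) ∫_{𝕊^{d-1}} ((d-1) h² + h Δh) dθ`. -/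
def intH3 {d : ℕ} (K : ConvexBody (EuclideanSpace ℝ (Fin d))) : ℝ :=
  (1 / ((d : ℝ) - 1)) *
    ∫ θ, (((d : ℝ) - 1) * (suppS K θ) ^ 2 + suppS K θ * sphLap (suppS K) θ) ∂(sphMeasure d)

/-- The curvature integral `∫_Σ H_{d-2}²/H_{d-1} dS` of `Σ = ∂K`, expressed via the
support function: `H_{d-2}/H_{d-1} = h + Δh/(d-1)` and `dθ = H_{d-1} dS`, so
`∫_Σ H_{d-2}²/H_{d-1} dS = ∫_{𝕊^{d-1}} (h + Δh/(d-1))² dθ`. -/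
def intH2sq {d : ℕ} (K : ConvexBody (EuclideanSpace ℝ (Fin d))) : ℝ :=
  ∫ θ, (suppS K θ + sphLap (suppS K) θ / ((d : ℝ) - 1)) ^ 2 ∂(sphMeasure d)

/-- The Steiner point `z(K) = (1/|𝔹^d|) ∫_{𝕊^{d-1}} h_K(θ) θ dθ`. -/
def steinerPt {d : ℕ} (K : ConvexBody (EuclideanSpace ℝ (Fin d))) :
    EuclideanSpace ℝ (Fin d) :=
  ((volume (Metric.ball (0 : EuclideanSpace ℝ (Fin d)) 1)).toReal)⁻¹ •
    ∫ θ, suppS K θ • (θ : EuclideanSpace ℝ (Fin d)) ∂(sphMeasure d)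

/-- The mean width `w̄(K) = (2/|𝕊^{d-1}|) ∫_{𝕊^{d-1}} h_K dθ`. -/
def meanWidth {d : ℕ} (K : ConvexBody (EuclideanSpace ℝ (Fin d))) : ℝ :=
  (2 / sphArea d) * ∫ θ, suppS K θ ∂(sphMeasure d)

/-- The support function of the Steiner ball `B(K)` of `K` (the ball centered at the
Steiner point `z(K)` with diameter the mean width `w̄(K)`):
`h_{B(K)}(θ) = w̄(K)/2 + z(K)·θ`. -/
def steinerBallSupp {d : ℕ} (K : ConvexBody (EuclideanSpace ℝ (Fin d))) :
    Metric.sphere (0 : EuclideanSpace ℝ (Fin d)) 1 → ℝ :=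
  fun θ => meanWidth K / 2 + ⟪steinerPt K, θ.val⟫

/-- The squared `L²` distance `δ₂(K, B(K))²` between `K` and its Steiner ball. -/
def delta2SqSteiner {d : ℕ} (K : ConvexBody (EuclideanSpace ℝ (Fin d))) : ℝ :=
  ∫ θ, (suppS K θ - steinerBallSupp K θ) ^ 2 ∂(sphMeasure d)

/-- The squared `L²` distance `δ₂(K, L)² = ∫_{𝕊^{d-1}} (h_K - h_L)² dθ`. -/
def delta2Sq {d : ℕ} (K L : ConvexBody (EuclideanSpace ℝ (Fin d))) : ℝ :=
  ∫ θ, (suppS K θ - suppS L θ) ^ 2 ∂(sphMeasure d)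

/-!
On the unit sphere of `ℝ^d` the operator `-Δ` has the eigenvalues `λₖ = k (k + d - 2)`, with the
constants as eigenfunctions for `λ₀ = 0`. Instead of diagonalizing, one uses that `Δ` maps
restrictions of polynomials of degree at most `k` to such, that it is `-λₖ` modulo lower degree,
that it is symmetric in `L²`, and that polynomials are dense in `L²` by Stone–Weierstrass. Peeling
off one degree at a time by orthogonal projection shows that for every quadratic `t² - a t + b`
which is nonnegative at all `λₖ`, `k ≥ 1`, the form `‖Δf‖² + a ⟪f, Δf⟫ + b ‖f‖²` is at least `b`
times the squared norm of the mean of `f`. The quadratic `(t - λ₁) (t - λ₂)`, with `λ₁ = d - 1` and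
`λ₂ = 2 d`, gives the deficit bound after clearing denominators.

Symmetry of `Δ` is the divergence theorem on the sphere for homogeneous tangential vector fields. It
follows from the one on `ℝ^d` by multiplying with a radial cutoff and separating the radial factor
in polar coordinates.
-/

section FilteredOperator

variable {E M : Type*} [NormedAddCommGroup E] [InnerProductSpace ℝ E] [AddCommGroup M] [Module ℝ M]

/-- An operator `T` on `M`, symmetric for the inner product pulled back along `ι : M → E`, which
preserves the filtration `U`, vanishes on `U 0` and acts on the `(N + 1)`-st graded piece as
multiplication by `-μ (N + 1)`. The model is the spherical Laplacian acting on polynomials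
filtered by degree. -/
structure IsFilteredSymmetric (ι : M →ₗ[ℝ] E) (T : M →ₗ[ℝ] M) (U : ℕ → Submodule ℝ M)
    (μ : ℕ → ℝ) : Prop where
  mono : Monotone U
  apply_eq_zero : ∀ p ∈ U 0, T p = 0
  apply_add_smul_mem : ∀ N, ∀ p ∈ U (N + 1), T p + μ (N + 1) • p ∈ U N
  inner_apply_left : ∀ p q, ⟪ι (T p), ι q⟫ = ⟪ι p, ι (T q)⟫

namespace IsFilteredSymmetric

variable {ι : M →ₗ[ℝ] E} {T : M →ₗ[ℝ] M} {U : ℕ → Submodule ℝ M} {μ : ℕ → ℝ}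

theorem apply_mem (h : IsFilteredSymmetric ι T U μ) {N : ℕ} {p : M} (hp : p ∈ U N) :
    T p ∈ U N := by
  cases N with
  | zero => rw [h.apply_eq_zero p hp]; exact zero_mem _
  | succ N =>
    rw [← add_sub_cancel_right (T p) (μ (N + 1) • p)]
    exact sub_mem (h.mono N.le_succ (h.apply_add_smul_mem N p hp)) (Submodule.smul_mem _ _ hp)

theorem map_apply_eq_neg_smul (h : IsFilteredSymmetric ι T U μ) {N : ℕ} {q : M}
    (hq : q ∈ U (N + 1)) (horth : ∀ p ∈ U N, ⟪ι q, ι p⟫ = 0) :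
    ι (T q) = -μ (N + 1) • ι q := by
  set r := T q + μ (N + 1) • q with hr
  have hrU : r ∈ U N := h.apply_add_smul_mem N q hq
  have hιr : ι r = ι (T q) + μ (N + 1) • ι q := by rw [hr, map_add, map_smul]
  have hr_zero : ι r = 0 := by
    rw [← inner_self_eq_zero (𝕜 := ℝ)]
    calc ⟪ι r, ι r⟫ = ⟪ι (T q), ι r⟫ + μ (N + 1) * ⟪ι q, ι r⟫ := by
          nth_rw 1 [hιr]
          rw [inner_add_left, real_inner_smul_left]
      _ = 0 := by
          rw [h.inner_apply_left, horth _ (h.apply_mem hrU), horth _ hrU, mul_zero, add_zero]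
  rw [neg_smul, eq_neg_iff_add_eq_zero, ← hιr, hr_zero]

theorem exists_orthogonal_decomposition (h : IsFilteredSymmetric ι T U μ) {N : ℕ}
    [((U N).map ι).HasOrthogonalProjection] {p : M} (hp : p ∈ U (N + 1)) :
    ∃ p' ∈ U N, ∃ q ∈ U (N + 1), p = p' + q ∧ ∀ r ∈ U N, ⟪ι q, ι r⟫ = 0 := by
  obtain ⟨p', hp', hproj⟩ := ((U N).map ι).starProjection_apply_mem (ι p)
  refine ⟨p', hp', p - p', sub_mem hp (h.mono N.le_succ hp'), (add_sub_cancel p' p).symm, ?_⟩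
  intro r hr
  rw [map_sub, hproj]
  exact Submodule.inner_left_of_mem_orthogonal (Submodule.mem_map_of_mem (f := ι) hr)
    (Submodule.sub_starProjection_mem_orthogonal (ι p))

theorem mul_inner_sq_le_of_mem (h : IsFilteredSymmetric ι T U μ)
    [∀ N, ((U N).map ι).HasOrthogonalProjection] {a b : ℝ} (hb : 0 ≤ b)
    (hab : ∀ N, 0 ≤ μ (N + 1) ^ 2 - a * μ (N + 1) + b) {e : M} (he : e ∈ U 0)
    {N : ℕ} {p : M} (hp : p ∈ U N) :
    b * ⟪ι p, ι e⟫ ^ 2 ≤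
      (⟪ι (T p), ι (T p)⟫ + a * ⟪ι p, ι (T p)⟫ + b * ⟪ι p, ι p⟫) * ⟪ι e, ι e⟫ := by
  induction N generalizing p with
  | zero =>
    rw [h.apply_eq_zero p hp, map_zero, inner_zero_left, inner_zero_right, mul_zero, zero_add,
      zero_add, mul_assoc, sq]
    exact mul_le_mul_of_nonneg_left (real_inner_mul_inner_self_le _ _) hb
  | succ N ih =>
    obtain ⟨p', hp', q, hq, rfl, horth⟩ := h.exists_orthogonal_decomposition hp
    have horth' : ∀ r ∈ U N, ⟪ι r, ι q⟫ = 0 := fun r hr => by rw [real_inner_comm, horth r hr]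
    have hgain : 0 ≤ (μ (N + 1) ^ 2 - a * μ (N + 1) + b) * ⟪ι q, ι q⟫ * ⟪ι e, ι e⟫ :=
      mul_nonneg (mul_nonneg (hab N) real_inner_self_nonneg) real_inner_self_nonneg
    simp only [map_add, h.map_apply_eq_neg_smul hq horth, inner_add_left, inner_add_right,
      real_inner_smul_left, real_inner_smul_right, horth _ hp', horth' _ hp',
      horth _ (h.apply_mem hp'), horth' _ (h.apply_mem hp'), horth _ (h.mono N.zero_le he)]
    linear_combination ih hp' + hgain

theorem starProjection_eq_map_apply (h : IsFilteredSymmetric ι T U μ) {f g : E}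
    (hfg : ∀ p, ⟪g, ι p⟫ = ⟪f, ι (T p)⟫) {N : ℕ} [((U N).map ι).HasOrthogonalProjection] {p : M}
    (hp : p ∈ U N) (hf : ((U N).map ι).starProjection f = ι p) :
    ((U N).map ι).starProjection g = ι (T p) := by
  refine Submodule.eq_starProjection_of_mem_of_inner_eq_zero
    (Submodule.mem_map_of_mem (h.apply_mem hp)) ?_
  rintro _ ⟨q, hq, rfl⟩
  rw [inner_sub_left, hfg, h.inner_apply_left, ← hf, ← inner_sub_left]
  exact Submodule.starProjection_inner_eq_zero f _
    (Submodule.mem_map_of_mem (h.apply_mem hq))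

theorem mul_inner_sq_le (h : IsFilteredSymmetric ι T U μ)
    [∀ N, ((U N).map ι).HasOrthogonalProjection]
    (hdense : Dense (⋃ N, ((U N).map ι : Set E))) {a b : ℝ} (hb : 0 ≤ b)
    (hab : ∀ N, 0 ≤ μ (N + 1) ^ 2 - a * μ (N + 1) + b) {e : M} (he : e ∈ U 0) {f g : E}
    (hfg : ∀ p, ⟪g, ι p⟫ = ⟪f, ι (T p)⟫) :
    b * ⟪f, ι e⟫ ^ 2 ≤ (⟪g, g⟫ + a * ⟪f, g⟫ + b * ⟪f, f⟫) * ⟪ι e, ι e⟫ := by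
  let V : ℕ → Submodule ℝ E := fun N => (U N).map ι
  have hV : Monotone V := fun _ _ hMN => Submodule.map_mono (h.mono hMN)
  have hV_top : ⊤ ≤ (⨆ N, V N).topologicalClosure := fun x _ =>
    closure_mono (Set.iUnion_subset fun N => le_iSup V N) (hdense x)
  have hf := Submodule.starProjection_tendsto_self V hV f hV_top
  have hg := Submodule.starProjection_tendsto_self V hV g hV_top
  refine le_of_tendsto_of_tendsto' (((hf.inner tendsto_const_nhds).pow 2).const_mul b)
    ((((hg.inner hg).add ((hf.inner hg).const_mul a)).add ((hf.inner hf).const_mul b)).mul_const _)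
    fun N => ?_
  obtain ⟨p, hp, hpf⟩ := (V N).starProjection_apply_mem f
  rw [h.starProjection_eq_map_apply hfg hp hpf.symm, ← hpf]
  exact h.mul_inner_sq_le_of_mem hb hab he hp

end IsFilteredSymmetric

end FilteredOperator

open scoped ContDiff

section Homogeneous

/-- Smoothness on the complement of the origin, the domain of homogeneous functions. -/
def SmoothOffZero {E : Type*} [NormedAddCommGroup E] [NormedSpace ℝ E] (F : E → ℝ) : Prop :=
  ContDiffOn ℝ ∞ F {0}ᶜ

/-- Positive homogeneity of integer degree `k`. Nothing is required at the origin, so that negative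
degrees are allowed. -/
def IsPosHomogeneous {E : Type*} [AddCommGroup E] [Module ℝ E] (k : ℤ) (F : E → ℝ) : Prop :=
  ∀ x ≠ 0, ∀ r : ℝ, 0 < r → F (r • x) = r ^ k * F x

variable {E : Type*} [NormedAddCommGroup E]

section NormedSpace

variable [NormedSpace ℝ E] {k l : ℤ} {F G : E → ℝ} {x : E}

namespace SmoothOffZero

theorem contDiffAt (hF : SmoothOffZero F) (hx : x ≠ 0) : ContDiffAt ℝ ∞ F x :=
  ContDiffOn.contDiffAt hF (isOpen_compl_singleton.mem_nhds hx)

theorem differentiableAt (hF : SmoothOffZero F) (hx : x ≠ 0) : DifferentiableAt ℝ F x :=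
  (hF.contDiffAt hx).differentiableAt (by simp)

theorem fderiv_apply (hF : SmoothOffZero F) (v : E) : SmoothOffZero fun x => fderiv ℝ F x v :=
  (ContDiffOn.fderiv_of_isOpen (m := ∞) hF isOpen_compl_singleton (by simp)).clm_apply
    contDiffOn_const

end SmoothOffZero

namespace IsPosHomogeneous

theorem mul (hF : IsPosHomogeneous k F) (hG : IsPosHomogeneous l G) :
    IsPosHomogeneous (k + l) fun x => F x * G x := fun x hx r hr => by
  simp only [hF x hx r hr, hG x hx r hr, zpow_add₀ hr.ne']
  ring

theorem sum {ι : Type*} {s : Finset ι} {F : ι → E → ℝ} (hF : ∀ i ∈ s, IsPosHomogeneous k (F i)) :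
    IsPosHomogeneous k fun x => ∑ i ∈ s, F i x := fun x hx r hr => by
  simp only [Finset.mul_sum]
  exact Finset.sum_congr rfl fun i hi => hF i hi x hx r hr

theorem fderiv_apply (hF : IsPosHomogeneous k F) (v : E) :
    IsPosHomogeneous (k - 1) fun x => fderiv ℝ F x v := fun x hx r hr => by
  have hscale : (fun y => F (r • y)) =ᶠ[nhds x] r ^ k • F := by
    filter_upwards [isOpen_compl_singleton.mem_nhds hx] with y hy using hF y hy r hr
  have hderiv : r • fderiv ℝ F (r • x) = r ^ k • fderiv ℝ F x := by
    rw [← fderiv_comp_smul, hscale.fderiv_eq, fderiv_const_smul_field, Pi.smul_apply]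
  rw [zpow_sub_one₀ hr.ne', mul_right_comm, eq_mul_inv_iff_mul_eq₀ hr.ne', mul_comm]
  exact congrArg (fun L => L v) hderiv

theorem fderiv_self (hF : IsPosHomogeneous k F) (hx : x ≠ 0) (hd : DifferentiableAt ℝ F x) :
    fderiv ℝ F x x = k * F x := by
  have hline : HasDerivAt (fun r : ℝ => F (r • x)) (fderiv ℝ F x x) 1 := by
    have hsmul : HasDerivAt (fun r : ℝ => r • x) x 1 := by
      simpa using (hasDerivAt_id (1 : ℝ)).smul_const x
    have hFx : HasFDerivAt F (fderiv ℝ F x) ((1 : ℝ) • x) := by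
      simpa using hd.hasFDerivAt
    exact hFx.comp_hasDerivAt 1 hsmul
  have hpow : HasDerivAt (fun r : ℝ => r ^ k * F x) (k * F x) 1 := by
    simpa using (hasDerivAt_zpow k (1 : ℝ) (Or.inl one_ne_zero)).mul_const (F x)
  refine hline.unique (hpow.congr_of_eventuallyEq ?_)
  filter_upwards [lt_mem_nhds (zero_lt_one' ℝ)] with r hr using hF x hx r hr

end IsPosHomogeneous

theorem isPosHomogeneous_norm_zpow (k : ℤ) : IsPosHomogeneous k fun x : E => ‖x‖ ^ k :=
  fun x _ r hr => by simp only [norm_smul, Real.norm_of_nonneg hr.le, mul_zpow]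

end NormedSpace

theorem contDiffAt_zpow {t : ℝ} (ht : t ≠ 0) (k : ℤ) : ContDiffAt ℝ ∞ (fun s : ℝ => s ^ k) t := by
  cases k with
  | ofNat n => simpa using contDiffAt_id.pow n
  | negSucc n => simpa using! (contDiffAt_id.pow (n + 1)).inv (pow_ne_zero _ ht)

theorem smoothOffZero_norm_zpow [InnerProductSpace ℝ E] (k : ℤ) :
    SmoothOffZero fun x : E => ‖x‖ ^ k := fun x hx =>
  ((contDiffAt_zpow (norm_ne_zero_iff.2 hx) k).comp x (contDiffAt_norm ℝ hx)).contDiffWithinAt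

theorem hasFDerivAt_norm [InnerProductSpace ℝ E] {x : E} (hx : x ≠ 0) :
    HasFDerivAt (fun y : E => ‖y‖) (‖x‖⁻¹ • innerSL ℝ x) x := by
  have hsqrt := (hasStrictFDerivAt_norm_sq x).hasFDerivAt.sqrt (by simpa using hx)
  simp only [Real.sqrt_sq (norm_nonneg _)] at hsqrt
  rwa [one_div, mul_inv, ← Nat.cast_smul_eq_nsmul ℝ, smul_smul, Nat.cast_ofNat, mul_right_comm,
    inv_mul_cancel₀ two_ne_zero, one_mul] at hsqrt

section PolarCoordinates

variable [NormedSpace ℝ E] [FiniteDimensional ℝ E] [Nontrivial E] [MeasurableSpace E]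
  [BorelSpace E] {k : ℤ} {F : E → ℝ}

theorem IsPosHomogeneous.integral_comp_norm_mul (hF : IsPosHomogeneous k F) (φ : ℝ → ℝ)
    (μ : Measure E) [μ.IsAddHaarMeasure] :
    ∫ x, φ ‖x‖ * F x ∂μ = (∫ θ : Metric.sphere (0 : E) 1, F θ ∂μ.toSphere) *
      ∫ r : Set.Ioi (0 : ℝ), φ r * (r : ℝ) ^ k
        ∂(Measure.volumeIoiPow (Module.finrank ℝ E - 1)) := by
  calc ∫ x, φ ‖x‖ * F x ∂μ
    _ = ∫ x : ({0}ᶜ : Set E), φ ‖x.1‖ * F x.1 ∂(μ.comap (↑)) := by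
      rw [integral_subtype_comap (measurableSet_singleton _).compl fun x ↦ φ ‖x‖ * F x,
        restrict_compl_singleton]
    _ = ∫ z : Metric.sphere (0 : E) 1 × Set.Ioi (0 : ℝ), F z.1 * (φ z.2 * (z.2 : ℝ) ^ k)
          ∂μ.toSphere.prod (.volumeIoiPow (Module.finrank ℝ E - 1)) := by
      rw [← μ.measurePreserving_homeomorphUnitSphereProd.integral_comp
        (Homeomorph.measurableEmbedding _)]
      refine integral_congr_ae (Filter.Eventually.of_forall fun x => ?_)
      have hx : 0 < ‖x.1‖ := norm_pos_iff.2 x.2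
      have hpolar : F x.1 = ‖x.1‖ ^ k * F (‖x.1‖⁻¹ • x.1) := by
        rw [← hF _ (smul_ne_zero (inv_ne_zero hx.ne') x.2) _ hx, smul_inv_smul₀ hx.ne']
      simp only [homeomorphUnitSphereProd_apply_fst_coe, homeomorphUnitSphereProd_apply_snd_coe]
      rw [hpolar]
      ring
    _ = _ := integral_prod_mul (fun θ : Metric.sphere (0 : E) 1 => F θ)
      fun r : Set.Ioi (0 : ℝ) => φ r * (r : ℝ) ^ k

end PolarCoordinates

end Homogeneous

section Sphere

variable {d : ℕ}

local notation "𝔼[" d "]" => EuclideanSpace ℝ (Fin d)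
local notation "𝕊[" d "]" => Metric.sphere (0 : EuclideanSpace ℝ (Fin d)) 1

section PartialDerivatives

variable {k : ℤ} {F G : 𝔼[d] → ℝ} {x : 𝔼[d]}

/-- The partial derivative `∂ᵢF`. -/
def partialDeriv (i : Fin d) (F : 𝔼[d] → ℝ) (x : 𝔼[d]) : ℝ :=
  fderiv ℝ F x (EuclideanSpace.single i 1)

theorem eucLap_eq_sum_partialDeriv (F : 𝔼[d] → ℝ) (x : 𝔼[d]) :
    eucLap F x = ∑ i, partialDeriv i (partialDeriv i F) x :=
  rfl

theorem SmoothOffZero.partialDeriv (hF : SmoothOffZero F) (i : Fin d) :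
    SmoothOffZero (partialDeriv i F) :=
  hF.fderiv_apply _

theorem SmoothOffZero.eucLap (hF : SmoothOffZero F) : SmoothOffZero (eucLap F) :=
  ContDiffOn.sum fun i _ => (hF.partialDeriv i).partialDeriv i

theorem IsPosHomogeneous.partialDeriv (hF : IsPosHomogeneous k F) (i : Fin d) :
    IsPosHomogeneous (k - 1) (partialDeriv i F) :=
  hF.fderiv_apply _

theorem partialDeriv_congr (h : F =ᶠ[nhds x] G) (i : Fin d) :
    partialDeriv i F x = partialDeriv i G x := by
  rw [partialDeriv, h.fderiv_eq, partialDeriv]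

theorem partialDeriv_sum {ι : Type*} {s : Finset ι} {F : ι → 𝔼[d] → ℝ}
    (hF : ∀ j ∈ s, DifferentiableAt ℝ (F j) x) (i : Fin d) :
    partialDeriv i (fun y => ∑ j ∈ s, F j y) x = ∑ j ∈ s, partialDeriv i (F j) x := by
  rw [partialDeriv, fderiv_fun_sum hF, _root_.sum_apply]
  rfl

theorem partialDeriv_add (hF : DifferentiableAt ℝ F x) (hG : DifferentiableAt ℝ G x) (i : Fin d) :
    partialDeriv i (fun y => F y + G y) x = partialDeriv i F x + partialDeriv i G x := by
  rw [partialDeriv, fderiv_fun_add hF hG]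
  rfl

theorem partialDeriv_const_mul (hF : DifferentiableAt ℝ F x) (c : ℝ) (i : Fin d) :
    partialDeriv i (fun y => c * F y) x = c * partialDeriv i F x := by
  rw [partialDeriv, fderiv_const_mul hF]
  rfl

theorem partialDeriv_mul (hF : DifferentiableAt ℝ F x) (hG : DifferentiableAt ℝ G x) (i : Fin d) :
    partialDeriv i (fun y => F y * G y) x =
      F x * partialDeriv i G x + partialDeriv i F x * G x := by
  simp only [partialDeriv, fderiv_fun_mul hF hG, _root_.add_apply,
    _root_.smul_apply, smul_eq_mul]
  ring

theorem partialDeriv_coord (i j : Fin d) :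
    partialDeriv i (fun y : 𝔼[d] => y j) x = if i = j then 1 else 0 := by
  have h : fderiv ℝ (fun y : 𝔼[d] => y j) x = EuclideanSpace.proj j :=
    (EuclideanSpace.proj (𝕜 := ℝ) j).hasFDerivAt.fderiv
  simp [partialDeriv, h, eq_comm]

theorem partialDeriv_comp_norm {g : ℝ → ℝ} (hx : x ≠ 0) (hg : DifferentiableAt ℝ g ‖x‖)
    (i : Fin d) : partialDeriv i (fun y => g ‖y‖) x = deriv g ‖x‖ * (‖x‖⁻¹ * x i) := by
  have hcomp : HasFDerivAt (fun y : 𝔼[d] => g ‖y‖) (deriv g ‖x‖ • ‖x‖⁻¹ • innerSL ℝ x) x :=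
    hg.hasDerivAt.comp_hasFDerivAt x (hasFDerivAt_norm hx)
  rw [partialDeriv, hcomp.fderiv]
  simp [EuclideanSpace.inner_single_right]

theorem partialDeriv_norm_zpow (hx : x ≠ 0) (k : ℤ) (i : Fin d) :
    partialDeriv i (fun y => ‖y‖ ^ k) x = k * (‖x‖ ^ (k - 2) * x i) := by
  have hn : ‖x‖ ≠ 0 := norm_ne_zero_iff.2 hx
  rw [partialDeriv_comp_norm (g := fun t => t ^ k) hx (differentiableAt_zpow.2 (Or.inl hn)) i,
    deriv_zpow, show k - 2 = k - 1 - 1 by ring, zpow_sub_one₀ hn (k - 1)]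
  ring

theorem sum_coord_mul_partialDeriv (F : 𝔼[d] → ℝ) (x : 𝔼[d]) :
    ∑ i, x i * partialDeriv i F x = fderiv ℝ F x x := by
  have hx : ∑ i, x i • EuclideanSpace.single i (1 : ℝ) = x := by
    ext j
    simp [Pi.single_apply]
  conv_rhs => arg 2; rw [← hx]
  simp only [map_sum, map_smul, smul_eq_mul, partialDeriv]

theorem IsPosHomogeneous.sum_coord_mul_partialDeriv (hF : IsPosHomogeneous k F)
    (hx : x ≠ 0) (hd : DifferentiableAt ℝ F x) :
    ∑ i, x i * _root_.partialDeriv i F x = k * F x := by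
  rw [_root_.sum_coord_mul_partialDeriv, hF.fderiv_self hx hd]

theorem eucLap_congr (h : F =ᶠ[nhds x] G) : eucLap F x = eucLap G x :=
  Finset.sum_congr rfl fun i _ => partialDeriv_congr
    (h.eventuallyEq_nhds.mono fun _ hy => partialDeriv_congr hy i) i

theorem eucLap_sum {ι : Type*} {s : Finset ι} {F : ι → 𝔼[d] → ℝ}
    (hF : ∀ j ∈ s, SmoothOffZero (F j)) (hx : x ≠ 0) :
    eucLap (fun y => ∑ j ∈ s, F j y) x = ∑ j ∈ s, eucLap (F j) x := by
  have hpartial (i : Fin d) : partialDeriv i (fun y => ∑ j ∈ s, F j y) =ᶠ[nhds x]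
      fun y => ∑ j ∈ s, partialDeriv i (F j) y := by
    filter_upwards [isOpen_compl_singleton.mem_nhds hx] with y hy
    exact partialDeriv_sum (fun j hj => (hF j hj).differentiableAt hy) i
  simp only [eucLap_eq_sum_partialDeriv]
  rw [Finset.sum_comm]
  refine Finset.sum_congr rfl fun i _ => ?_
  rw [partialDeriv_congr (hpartial i),
    partialDeriv_sum fun j hj => ((hF j hj).partialDeriv i).differentiableAt hx]

theorem eucLap_mul (hF : SmoothOffZero F) (hG : SmoothOffZero G) (hx : x ≠ 0) :
    eucLap (fun y => F y * G y) x =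
      F x * eucLap G x + 2 * ∑ i, partialDeriv i F x * partialDeriv i G x + eucLap F x * G x := by
  have hpartial (i : Fin d) : partialDeriv i (fun y => F y * G y) =ᶠ[nhds x]
      fun y => F y * partialDeriv i G y + partialDeriv i F y * G y := by
    filter_upwards [isOpen_compl_singleton.mem_nhds hx] with y hy
    exact partialDeriv_mul (hF.differentiableAt hy) (hG.differentiableAt hy) i
  have hpartial₂ (i : Fin d) : partialDeriv i (partialDeriv i fun y => F y * G y) x =
      F x * partialDeriv i (partialDeriv i G) x + 2 * (partialDeriv i F x * partialDeriv i G x) +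
        partialDeriv i (partialDeriv i F) x * G x := by
    have dF := hF.differentiableAt hx
    have dG := hG.differentiableAt hx
    have dF' := (hF.partialDeriv i).differentiableAt hx
    have dG' := (hG.partialDeriv i).differentiableAt hx
    rw [partialDeriv_congr (hpartial i), partialDeriv_add (dF.fun_mul dG') (dF'.fun_mul dG),
      partialDeriv_mul dF dG', partialDeriv_mul dF' dG]
    ring
  simp only [eucLap_eq_sum_partialDeriv, hpartial₂, Finset.sum_add_distrib, ← Finset.mul_sum,
    ← Finset.sum_mul]

theorem eucLap_norm_zpow (hx : x ≠ 0) (k : ℤ) :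
    eucLap (fun y : 𝔼[d] => ‖y‖ ^ k) x = k * (k + d - 2) * ‖x‖ ^ (k - 2) := by
  have hn : ‖x‖ ≠ 0 := norm_ne_zero_iff.2 hx
  have hpartial (i : Fin d) : partialDeriv i (fun y : 𝔼[d] => ‖y‖ ^ k) =ᶠ[nhds x]
      fun y => k * (‖y‖ ^ (k - 2) * y i) := by
    filter_upwards [isOpen_compl_singleton.mem_nhds hx] with y hy
    exact partialDeriv_norm_zpow hy k i
  have hpartial₂ (i : Fin d) : partialDeriv i (partialDeriv i fun y : 𝔼[d] => ‖y‖ ^ k) x =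
      k * (‖x‖ ^ (k - 2) + (k - 2) * ‖x‖ ^ (k - 2 - 2) * x i ^ 2) := by
    have dnorm := (smoothOffZero_norm_zpow (E := 𝔼[d]) (k - 2)).differentiableAt hx
    have dcoord : DifferentiableAt ℝ (fun y : 𝔼[d] => y i) x := by fun_prop
    rw [partialDeriv_congr (hpartial i), partialDeriv_const_mul (dnorm.fun_mul dcoord),
      partialDeriv_mul dnorm dcoord, partialDeriv_coord, if_pos rfl, partialDeriv_norm_zpow hx]
    push_cast
    ring
  simp only [eucLap_eq_sum_partialDeriv, hpartial₂, ← Finset.mul_sum, Finset.sum_add_distrib,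
    ← EuclideanSpace.real_norm_sq_eq, zpow_sub₀ hn (k - 2), zpow_ofNat]
  simp only [Finset.sum_const, Finset.card_univ, Fintype.card_fin, nsmul_eq_mul]
  field_simp
  ring

end PartialDerivatives

section DegreeZeroExtension

variable {k : ℤ} {F G : 𝔼[d] → ℝ} {f g : 𝕊[d] → ℝ} {x : 𝔼[d]}

theorem norm_inv_smul_mem_sphere (hx : x ≠ 0) : ‖x‖⁻¹ • x ∈ 𝕊[d] := by
  rw [mem_sphere_zero_iff_norm, norm_smul, norm_inv, norm_norm,
    inv_mul_cancel₀ (norm_ne_zero_iff.2 hx)]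

theorem coe_sphere_ne_zero (θ : 𝕊[d]) : (θ : 𝔼[d]) ≠ 0 :=
  ne_zero_of_mem_unit_sphere θ

theorem ext0_of_ne_zero (f : 𝕊[d] → ℝ) (hx : x ≠ 0) :
    ext0 f x = f ⟨‖x‖⁻¹ • x, norm_inv_smul_mem_sphere hx⟩ := by
  rw [ext0, dif_neg hx]

theorem ext0_coe (f : 𝕊[d] → ℝ) (θ : 𝕊[d]) : ext0 f θ = f θ := by
  rw [ext0_of_ne_zero f (coe_sphere_ne_zero θ)]
  exact congrArg f (Subtype.ext (by simp))

theorem isPosHomogeneous_ext0 (f : 𝕊[d] → ℝ) : IsPosHomogeneous 0 (ext0 f) := fun x hx r hr => by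
  rw [ext0_of_ne_zero f hx, ext0_of_ne_zero f (smul_ne_zero hr.ne' hx), zpow_zero, one_mul]
  congr 2
  rw [norm_smul, Real.norm_of_nonneg hr.le, mul_inv, smul_smul, mul_right_comm,
    inv_mul_cancel₀ hr.ne', one_mul]

theorem SmoothOffZero.sphSmooth (hF : SmoothOffZero F) : SphSmooth fun θ : 𝕊[d] => F θ := by
  have hcomp : SmoothOffZero fun x : 𝔼[d] => F (‖x‖⁻¹ • x) := fun x hx => by
    have hproj : ContDiffAt ℝ ∞ (fun x : 𝔼[d] => ‖x‖⁻¹ • x) x :=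
      ((contDiffAt_norm ℝ hx).inv (norm_ne_zero_iff.2 hx)).smul contDiffAt_id
    have hne : ‖x‖⁻¹ • x ≠ 0 := smul_ne_zero (inv_ne_zero (norm_ne_zero_iff.2 hx)) hx
    exact ((hF.contDiffAt hne).comp (f := fun x : 𝔼[d] => ‖x‖⁻¹ • x) x hproj).contDiffWithinAt
  exact hcomp.congr fun x hx => ext0_of_ne_zero _ hx

theorem IsPosHomogeneous.ext0_eq (hF : IsPosHomogeneous k F) (hx : x ≠ 0) :
    ext0 (fun θ : 𝕊[d] => F θ) x = ‖x‖ ^ (-k) * F x := by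
  rw [ext0_of_ne_zero _ hx, hF x hx _ (inv_pos.2 (norm_pos_iff.2 hx)), inv_zpow']

theorem SmoothOffZero.continuous_sphere (hF : SmoothOffZero F) :
    Continuous fun θ : 𝕊[d] => F θ :=
  ContinuousOn.comp_continuous hF.continuousOn continuous_subtype_val coe_sphere_ne_zero

namespace SphSmooth

theorem smoothOffZero (hf : SphSmooth f) : SmoothOffZero (ext0 f) :=
  hf

theorem continuous (hf : SphSmooth f) : Continuous f := by
  simpa only [ext0_coe] using hf.smoothOffZero.continuous_sphere

theorem continuous_sphLap (hf : SphSmooth f) : Continuous (sphLap f) :=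
  hf.smoothOffZero.eucLap.continuous_sphere

end SphSmooth

instance (d : ℕ) : IsFiniteMeasure (sphMeasure d) := by
  unfold sphMeasure
  infer_instance

theorem integrable_sphMeasure (hf : Continuous f) : Integrable f (sphMeasure d) :=
  hf.integrable_of_hasCompactSupport (HasCompactSupport.of_compactSpace f)

theorem SmoothBody.sphSmooth_suppS {K : ConvexBody 𝔼[d]} (hK : SmoothBody K) :
    SphSmooth (suppS K) :=
  SmoothOffZero.sphSmooth hK.2

end DegreeZeroExtension

section Green

/-- A smooth bump around the unit sphere, as a function of the distance to the origin. -/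
def annulusCutoff : ContDiffBump (1 : ℝ) where
  rIn := 1 / 4
  rOut := 1 / 2
  rIn_pos := by norm_num
  rIn_lt_rOut := by norm_num

theorem annulusCutoff_eq_zero_of_le {r : ℝ} (hr : r ≤ 1 / 2) : annulusCutoff r = 0 := by
  refine annulusCutoff.zero_of_le_dist ?_
  change 1 / 2 ≤ |r - 1|
  exact le_abs.2 (Or.inr (by linarith))

theorem annulusCutoff_eq_zero_of_ge {r : ℝ} (hr : 3 / 2 ≤ r) : annulusCutoff r = 0 := by
  refine annulusCutoff.zero_of_le_dist ?_
  change 1 / 2 ≤ |r - 1|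
  exact le_abs.2 (Or.inl (by linarith))

theorem eventually_annulusCutoff_norm_eq_zero :
    ∀ᶠ x : 𝔼[d] in nhds 0, annulusCutoff ‖x‖ = 0 := by
  filter_upwards [Metric.ball_mem_nhds (0 : 𝔼[d]) one_half_pos] with x hx
  exact annulusCutoff_eq_zero_of_le (mem_ball_zero_iff.1 hx).le

variable {F G : 𝔼[d] → ℝ} {f g : 𝕊[d] → ℝ}

theorem contDiff_annulusCutoff_mul (hF : SmoothOffZero F) :
    ContDiff ℝ ∞ fun x => annulusCutoff ‖x‖ * F x := by
  refine contDiff_iff_contDiffAt.2 fun x => ?_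
  rcases eq_or_ne x 0 with rfl | hx
  · refine (contDiffAt_const (c := (0 : ℝ))).congr_of_eventuallyEq ?_
    filter_upwards [eventually_annulusCutoff_norm_eq_zero] with y hy
    rw [hy, zero_mul]
  · exact (annulusCutoff.contDiffAt.comp x (contDiffAt_norm ℝ hx)).mul (hF.contDiffAt hx)

theorem hasCompactSupport_annulusCutoff_mul (F : 𝔼[d] → ℝ) :
    HasCompactSupport fun x => annulusCutoff ‖x‖ * F x := by
  refine HasCompactSupport.intro (isCompact_closedBall 0 (3 / 2)) fun x hx => ?_
  rw [mem_closedBall_zero_iff, not_le] at hx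
  rw [annulusCutoff_eq_zero_of_ge hx.le, zero_mul]

theorem integrable_partialDeriv (hF : ContDiff ℝ ∞ F) (hc : HasCompactSupport F) (i : Fin d) :
    Integrable (partialDeriv i F) :=
  ((hF.continuous_fderiv (by simp)).clm_apply continuous_const).integrable_of_hasCompactSupport
    (hc.fderiv_apply ℝ _)

theorem integral_partialDeriv (hF : ContDiff ℝ ∞ F) (hc : HasCompactSupport F) (i : Fin d) :
    ∫ x, partialDeriv i F x = 0 := by
  have hparts := integral_mul_fderiv_eq_neg_fderiv_mul_of_integrable (μ := volume)
    (f := fun _ : 𝔼[d] => (1 : ℝ)) (g := F) (v := EuclideanSpace.single i 1) (by simp)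
    (by simpa using! integrable_partialDeriv hF hc i)
    (by simpa using hF.continuous.integrable_of_hasCompactSupport hc)
    (fun x _ => differentiableAt_const _) (fun x _ => hF.differentiable (by simp) x)
  simpa only [one_mul, fderiv_fun_const, Pi.zero_apply, zero_apply, zero_mul, integral_zero,
    neg_zero] using! hparts

theorem sum_partialDeriv_annulusCutoff_mul {X : Fin d → 𝔼[d] → ℝ}
    (hX : ∀ i, SmoothOffZero (X i)) (htan : ∀ x ≠ 0, ∑ i, x i * X i x = 0) (x : 𝔼[d]) :
    ∑ i, partialDeriv i (fun y => annulusCutoff ‖y‖ * X i y) x =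
      annulusCutoff ‖x‖ * ∑ i, partialDeriv i (X i) x := by
  rcases eq_or_ne x 0 with rfl | hx
  · have hzero (i : Fin d) : (fun y => annulusCutoff ‖y‖ * X i y) =ᶠ[nhds 0] fun _ => 0 := by
      filter_upwards [eventually_annulusCutoff_norm_eq_zero] with y hy
      rw [hy, zero_mul]
    rw [norm_zero, annulusCutoff_eq_zero_of_le (by norm_num), zero_mul]
    refine Finset.sum_eq_zero fun i _ => ?_
    rw [partialDeriv_congr (hzero i), partialDeriv, fderiv_const_apply, zero_apply]
  · have hρ : DifferentiableAt ℝ annulusCutoff ‖x‖ :=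
      (annulusCutoff.contDiff (n := 1)).differentiable one_ne_zero _
    have hρ' : DifferentiableAt ℝ (fun y : 𝔼[d] => annulusCutoff ‖y‖) x :=
      hρ.comp x ((contDiffAt_norm ℝ hx).differentiableAt one_ne_zero)
    have hpartial (i : Fin d) : partialDeriv i (fun y => annulusCutoff ‖y‖ * X i y) x =
        annulusCutoff ‖x‖ * partialDeriv i (X i) x +
          deriv annulusCutoff ‖x‖ * ‖x‖⁻¹ * (x i * X i x) := by
      rw [partialDeriv_mul hρ' ((hX i).differentiableAt hx), partialDeriv_comp_norm hx hρ]
      ring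
    rw [Finset.sum_congr rfl fun i _ => hpartial i, Finset.sum_add_distrib, ← Finset.mul_sum,
      ← Finset.mul_sum, htan x hx, mul_zero, add_zero]

theorem integral_annulusCutoff_mul_zpow_ne_zero [NeZero d] (k : ℤ) :
    ∫ r : Set.Ioi (0 : ℝ), annulusCutoff r * (r : ℝ) ^ k ∂(Measure.volumeIoiPow (d - 1)) ≠ 0 := by
  have hpolar := (isPosHomogeneous_norm_zpow (E := 𝔼[d]) k).integral_comp_norm_mul
    annulusCutoff volume
  rw [finrank_euclideanSpace_fin] at hpolar
  let e : 𝔼[d] := EuclideanSpace.single 0 1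
  have he : annulusCutoff ‖e‖ * ‖e‖ ^ k ≠ 0 := by
    have hone : annulusCutoff 1 = 1 :=
      annulusCutoff.one_of_mem_closedBall (Metric.mem_closedBall_self annulusCutoff.rIn_pos.le)
    simp [e, hone]
  have hpos : 0 < ∫ x : 𝔼[d], annulusCutoff ‖x‖ * ‖x‖ ^ k :=
    (contDiff_annulusCutoff_mul (smoothOffZero_norm_zpow k)).continuous
      |>.integral_pos_of_hasCompactSupport_nonneg_nonzero (hasCompactSupport_annulusCutoff_mul _)
        (fun x => mul_nonneg annulusCutoff.nonneg (zpow_nonneg (norm_nonneg x) k)) he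
  rw [hpolar] at hpos
  exact right_ne_zero_of_mul hpos.ne'

theorem integral_sphere_sum_partialDeriv_eq_zero [NeZero d] {k : ℤ} {X : Fin d → 𝔼[d] → ℝ}
    (hX : ∀ i, SmoothOffZero (X i)) (hhom : ∀ i, IsPosHomogeneous k (X i))
    (htan : ∀ x ≠ 0, ∑ i, x i * X i x = 0) :
    ∫ θ : 𝕊[d], ∑ i, partialDeriv i (X i) θ ∂(sphMeasure d) = 0 := by
  have hsmooth (i : Fin d) := contDiff_annulusCutoff_mul (hX i)
  have hcompact (i : Fin d) := hasCompactSupport_annulusCutoff_mul (X i)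
  have hdiv : ∫ x : 𝔼[d], annulusCutoff ‖x‖ * ∑ i, partialDeriv i (X i) x = 0 := by
    simp only [← sum_partialDeriv_annulusCutoff_mul hX htan]
    rw [integral_finsetSum _ fun i _ => integrable_partialDeriv (hsmooth i) (hcompact i) i]
    exact Finset.sum_eq_zero fun i _ => integral_partialDeriv (hsmooth i) (hcompact i) i
  have hpolar := (IsPosHomogeneous.sum fun i (_ : i ∈ Finset.univ) =>
    (hhom i).partialDeriv i).integral_comp_norm_mul annulusCutoff volume
  rw [hdiv, finrank_euclideanSpace_fin] at hpolar
  exact (mul_eq_zero.1 hpolar.symm).resolve_right (integral_annulusCutoff_mul_zpow_ne_zero _)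

theorem integral_sphLap_mul [NeZero d] (hf : SphSmooth f) (hg : SphSmooth g) :
    ∫ θ, sphLap f θ * g θ ∂(sphMeasure d) =
      -∫ θ : 𝕊[d], ∑ i, partialDeriv i (ext0 f) θ * partialDeriv i (ext0 g) θ ∂(sphMeasure d) := by
  have hf' := hf.smoothOffZero
  have hg' := hg.smoothOffZero
  have htan (x : 𝔼[d]) (hx : x ≠ 0) : ∑ i, x i * (partialDeriv i (ext0 f) x * ext0 g x) = 0 := by
    simp only [← mul_assoc, ← Finset.sum_mul]
    rw [(isPosHomogeneous_ext0 f).sum_coord_mul_partialDeriv hx (hf'.differentiableAt hx),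
      Int.cast_zero, zero_mul, zero_mul]
  have hdiv := integral_sphere_sum_partialDeriv_eq_zero
    (fun i => (hf'.partialDeriv i).mul hg')
    (fun i => ((isPosHomogeneous_ext0 f).partialDeriv i).mul (isPosHomogeneous_ext0 g)) htan
  have hprod (θ : 𝕊[d]) (i : Fin d) :
      partialDeriv i (fun x => partialDeriv i (ext0 f) x * ext0 g x) θ =
        partialDeriv i (ext0 f) θ * partialDeriv i (ext0 g) θ +
          partialDeriv i (partialDeriv i (ext0 f)) θ * g θ := by
    have hθ := coe_sphere_ne_zero θ
    rw [partialDeriv_mul ((hf'.partialDeriv i).differentiableAt hθ) (hg'.differentiableAt hθ),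
      ext0_coe]
  have hgrad : Continuous fun θ : 𝕊[d] =>
      ∑ i, partialDeriv i (ext0 f) θ * partialDeriv i (ext0 g) θ :=
    continuous_finsetSum _ fun i _ =>
      (hf'.partialDeriv i).continuous_sphere.mul (hg'.partialDeriv i).continuous_sphere
  simp only [hprod, Finset.sum_add_distrib, ← Finset.sum_mul] at hdiv
  have hsplit := integral_add (integrable_sphMeasure hgrad)
    (integrable_sphMeasure (hf.continuous_sphLap.mul hg.continuous))
  exact eq_neg_of_add_eq_zero_right (hsplit.symm.trans hdiv)

theorem integral_sphLap_mul_comm [NeZero d] (hf : SphSmooth f) (hg : SphSmooth g) :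
    ∫ θ, sphLap f θ * g θ ∂(sphMeasure d) = ∫ θ, f θ * sphLap g θ ∂(sphMeasure d) := by
  simp_rw [mul_comm (f _), integral_sphLap_mul hf hg, integral_sphLap_mul hg hf,
    mul_comm (partialDeriv _ (ext0 g) _)]

end Green

section SphericalLaplacian

variable {F : 𝔼[d] → ℝ}

theorem sphLap_restrict_of_isPosHomogeneous {k : ℤ} (hF : SmoothOffZero F)
    (hk : IsPosHomogeneous k F) (θ : 𝕊[d]) :
    sphLap (fun θ => F θ) θ = eucLap F θ - k * (k + d - 2) * F θ := by
  have hθ := coe_sphere_ne_zero θ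
  have hext : ext0 (fun θ : 𝕊[d] => F θ) =ᶠ[nhds θ.val] fun x => ‖x‖ ^ (-k) * F x := by
    filter_upwards [isOpen_compl_singleton.mem_nhds hθ] with x hx using hk.ext0_eq hx
  have heuler := hk.sum_coord_mul_partialDeriv hθ (hF.differentiableAt hθ)
  calc sphLap (fun θ => F θ) θ
    _ = eucLap (fun x => ‖x‖ ^ (-k) * F x) θ := eucLap_congr hext
    _ = eucLap F θ - 2 * k * ∑ i, (θ : 𝔼[d]) i * partialDeriv i F θ
          - k * (-k + d - 2) * F θ := by
      rw [eucLap_mul (smoothOffZero_norm_zpow (-k)) hF hθ, eucLap_norm_zpow hθ]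
      simp only [partialDeriv_norm_zpow hθ, norm_eq_of_mem_sphere, one_zpow, one_mul, mul_one,
        mul_assoc, ← Finset.mul_sum, Int.cast_neg]
      ring
    _ = eucLap F θ - k * (k + d - 2) * F θ := by
      rw [heuler]
      ring

theorem sphLap_sum {ι : Type*} {s : Finset ι} {f : ι → 𝕊[d] → ℝ} (hf : ∀ j ∈ s, SphSmooth (f j))
    (θ : 𝕊[d]) : sphLap (fun θ => ∑ j ∈ s, f j θ) θ = ∑ j ∈ s, sphLap (f j) θ := by
  have hθ := coe_sphere_ne_zero θ
  have hext : ext0 (fun θ => ∑ j ∈ s, f j θ) =ᶠ[nhds θ.val] fun x => ∑ j ∈ s, ext0 (f j) x := by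
    filter_upwards [isOpen_compl_singleton.mem_nhds hθ] with x hx
    simp only [ext0_of_ne_zero _ hx]
  exact (eucLap_congr hext).trans (eucLap_sum (fun j hj => (hf j hj).smoothOffZero) hθ)

end SphericalLaplacian

section Polynomials

open MvPolynomial

theorem contDiff_eval (p : MvPolynomial (Fin d) ℝ) :
    ContDiff ℝ ∞ fun x : 𝔼[d] => eval x.ofLp p := by
  induction p using MvPolynomial.induction_on with
  | C a => simpa only [eval_C] using contDiff_const
  | add p q hp hq => simpa only [map_add] using hp.add hq
  | mul_X p i hp =>
    simp only [map_mul, eval_X]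
    exact hp.mul (EuclideanSpace.proj (𝕜 := ℝ) i).contDiff

theorem smoothOffZero_eval (p : MvPolynomial (Fin d) ℝ) :
    SmoothOffZero fun x : 𝔼[d] => eval x.ofLp p :=
  (contDiff_eval p).contDiffOn

theorem partialDeriv_eval (p : MvPolynomial (Fin d) ℝ) (i : Fin d) (x : 𝔼[d]) :
    partialDeriv i (fun y => eval y.ofLp p) x = eval x.ofLp (pderiv i p) := by
  have hdiff (p : MvPolynomial (Fin d) ℝ) : DifferentiableAt ℝ (fun y : 𝔼[d] => eval y.ofLp p) x :=
    (contDiff_eval p).differentiable (by simp) x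
  induction p using MvPolynomial.induction_on with
  | C a => simp [partialDeriv]
  | add p q hp hq =>
    simp only [map_add]
    rw [partialDeriv_add (hdiff p) (hdiff q), hp, hq]
  | mul_X p j hp =>
    have hcoord : DifferentiableAt ℝ (fun y : 𝔼[d] => y j) x := by fun_prop
    simp only [map_mul, eval_X, Derivation.leibniz, map_add, smul_eq_mul, pderiv_X]
    rw [partialDeriv_mul (hdiff p) hcoord, hp, partialDeriv_coord]
    rcases eq_or_ne i j with rfl | hij
    · simp [mul_comm]
    · simp [hij, hij.symm, mul_comm]

theorem isPosHomogeneous_eval {k : ℕ} {p : MvPolynomial (Fin d) ℝ} (hp : p.IsHomogeneous k) :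
    IsPosHomogeneous (k : ℤ) fun x : 𝔼[d] => eval x.ofLp p := fun x _ r _ => by
  simp only [eval_eq', Finset.mul_sum]
  refine Finset.sum_congr rfl fun m hm => ?_
  have hdeg : ∑ i, m i = k := by
    rw [hp.degree_eq_sum_deg_support hm, ← Finsupp.degree_eq_sum, Finsupp.degree_apply]
  simp only [PiLp.smul_apply, smul_eq_mul, mul_pow, Finset.prod_mul_distrib,
    Finset.prod_pow_eq_pow_sum, hdeg, zpow_natCast]
  ring

/-- The Laplacian on polynomials. -/
def polyLap : MvPolynomial (Fin d) ℝ →ₗ[ℝ] MvPolynomial (Fin d) ℝ :=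
  ∑ i, (pderiv i).toLinearMap ∘ₗ (pderiv i).toLinearMap

/-- The Euler operator `∑ xᵢ∂ᵢ`, which multiplies homogeneous polynomials by their degree. -/
def polyEuler : MvPolynomial (Fin d) ℝ →ₗ[ℝ] MvPolynomial (Fin d) ℝ :=
  ∑ i, LinearMap.mulLeft ℝ (X i) ∘ₗ (pderiv i).toLinearMap

/-- The polynomial operator which induces the spherical Laplacian on restrictions to the sphere. -/
def polySphLap : MvPolynomial (Fin d) ℝ →ₗ[ℝ] MvPolynomial (Fin d) ℝ :=
  polyLap - polyEuler ∘ₗ (polyEuler + ((d : ℝ) - 2) • LinearMap.id)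

/-- The `k`-th eigenvalue of minus the spherical Laplacian on the unit sphere of `ℝ^d`. -/
def sphEigenvalue (d k : ℕ) : ℝ :=
  k * (k + d - 2)

variable {k N : ℕ} {p : MvPolynomial (Fin d) ℝ}

theorem eucLap_eval (p : MvPolynomial (Fin d) ℝ) (x : 𝔼[d]) :
    eucLap (fun y => eval y.ofLp p) x = eval x.ofLp (polyLap p) := by
  have hpartial (i : Fin d) : partialDeriv i (fun y => eval y.ofLp p) =
      fun y => eval y.ofLp (pderiv i p) := funext (partialDeriv_eval p i)
  simp only [eucLap_eq_sum_partialDeriv, hpartial, partialDeriv_eval, polyLap,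
    LinearMap.sum_apply, map_sum]
  rfl

theorem polyEuler_of_isHomogeneous (hp : p.IsHomogeneous k) : polyEuler p = (k : ℝ) • p := by
  rw [Nat.cast_smul_eq_nsmul, ← hp.sum_X_mul_pderiv, polyEuler, LinearMap.sum_apply]
  rfl

theorem polySphLap_of_isHomogeneous (hp : p.IsHomogeneous k) :
    polySphLap p = polyLap p - sphEigenvalue d k • p := by
  have hshift : (polyEuler + ((d : ℝ) - 2) • LinearMap.id :
      MvPolynomial (Fin d) ℝ →ₗ[ℝ] MvPolynomial (Fin d) ℝ) p = ((k : ℝ) + d - 2) • p := by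
    rw [LinearMap.add_apply, LinearMap.smul_apply, LinearMap.id_apply,
      polyEuler_of_isHomogeneous hp, ← add_smul, add_sub_assoc]
  rw [polySphLap, LinearMap.sub_apply, LinearMap.comp_apply, hshift, map_smul,
    polyEuler_of_isHomogeneous hp, smul_smul, mul_comm, sphEigenvalue]

theorem sphLap_eval (p : MvPolynomial (Fin d) ℝ) (θ : 𝕊[d]) :
    sphLap (fun θ => eval θ.val.ofLp p) θ = eval θ.val.ofLp (polySphLap p) := by
  have hhom {k : ℕ} {p : MvPolynomial (Fin d) ℝ} (hp : p.IsHomogeneous k) :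
      sphLap (fun θ : 𝕊[d] => eval θ.val.ofLp p) θ = eval θ.val.ofLp (polySphLap p) := by
    rw [sphLap_restrict_of_isPosHomogeneous (smoothOffZero_eval p) (isPosHomogeneous_eval hp),
      eucLap_eval, polySphLap_of_isHomogeneous hp, map_sub, smul_eval, sphEigenvalue,
      Int.cast_natCast]
  rw [← sum_homogeneousComponent p]
  simp only [map_sum]
  rw [sphLap_sum fun j _ => (smoothOffZero_eval _).sphSmooth]
  exact Finset.sum_congr rfl fun j _ => hhom (homogeneousComponent_isHomogeneous j p)

theorem monotone_restrictTotalDegree {σ R : Type*} [CommSemiring R] :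
    Monotone (restrictTotalDegree σ R) := fun m n hmn p hp => by
  rw [mem_restrictTotalDegree] at hp ⊢
  exact hp.trans hmn

theorem mem_restrictTotalDegree_of_isHomogeneous {σ R : Type*} [CommSemiring R] {k N : ℕ}
    {p : MvPolynomial σ R} (hp : p.IsHomogeneous k) (hkN : k ≤ N) :
    p ∈ restrictTotalDegree σ R N :=
  (mem_restrictTotalDegree _ _ _).2 (hp.totalDegree_le.trans hkN)

theorem linearMap_mem_of_mem_restrictTotalDegree {σ R M : Type*} [CommSemiring R]
    [AddCommMonoid M] [Module R M] {L : MvPolynomial σ R →ₗ[R] M} {W : Submodule R M} {N : ℕ}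
    (hL : ∀ k ≤ N, ∀ p, p.IsHomogeneous k → L p ∈ W) {p : MvPolynomial σ R}
    (hp : p ∈ restrictTotalDegree σ R N) : L p ∈ W := by
  rw [← sum_homogeneousComponent p, map_sum]
  refine Submodule.sum_mem _ fun k hk => hL k ?_ _ (homogeneousComponent_isHomogeneous k p)
  exact (Finset.mem_range_succ_iff.1 hk).trans ((mem_restrictTotalDegree _ _ _).1 hp)

theorem polyLap_mem_of_isHomogeneous (hp : p.IsHomogeneous k) (hkN : k ≤ N + 1) :
    polyLap p ∈ restrictTotalDegree (Fin d) ℝ N := by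
  rw [polyLap, LinearMap.sum_apply]
  exact Submodule.sum_mem _ fun i _ => mem_restrictTotalDegree_of_isHomogeneous
    (hp.pderiv (i := i)).pderiv (by omega)

theorem polySphLap_eq_zero_of_mem (hp : p ∈ restrictTotalDegree (Fin d) ℝ 0) :
    polySphLap p = 0 := by
  rw [mem_restrictTotalDegree, Nat.le_zero, totalDegree_eq_zero_iff_eq_C] at hp
  rw [hp]
  simp [polySphLap, polyLap, polyEuler]

theorem polySphLap_add_smul_mem (hp : p ∈ restrictTotalDegree (Fin d) ℝ (N + 1)) :
    polySphLap p + sphEigenvalue d (N + 1) • p ∈ restrictTotalDegree (Fin d) ℝ N := by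
  refine linearMap_mem_of_mem_restrictTotalDegree
    (L := polySphLap + sphEigenvalue d (N + 1) • LinearMap.id) (fun k hk q hq => ?_) hp
  have hsplit : (polySphLap + sphEigenvalue d (N + 1) • LinearMap.id :
      MvPolynomial (Fin d) ℝ →ₗ[ℝ] MvPolynomial (Fin d) ℝ) q =
      polyLap q + (sphEigenvalue d (N + 1) - sphEigenvalue d k) • q := by
    rw [LinearMap.add_apply, polySphLap_of_isHomogeneous hq, LinearMap.smul_apply,
      LinearMap.id_apply, sub_smul]
    abel
  rw [hsplit]
  refine add_mem (polyLap_mem_of_isHomogeneous hq hk) ?_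
  rcases hk.eq_or_lt with rfl | hlt
  · rw [sub_self, zero_smul]
    exact zero_mem _
  · exact Submodule.smul_mem _ _
      (mem_restrictTotalDegree_of_isHomogeneous hq (Nat.lt_succ_iff.1 hlt))

end Polynomials

section SpectralInequality

open MvPolynomial

local notation "L²𝕊[" d "]" => Lp ℝ 2 (sphMeasure d)

/-- The algebra map restricting polynomials on `ℝ^d` to continuous functions on the unit sphere. -/
def polyOnSphere : MvPolynomial (Fin d) ℝ →ₐ[ℝ] C(𝕊[d], ℝ) :=
  aeval fun i => ⟨fun θ => θ.val i, by fun_prop⟩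

theorem polyOnSphere_apply (p : MvPolynomial (Fin d) ℝ) (θ : 𝕊[d]) :
    polyOnSphere p θ = eval θ.val.ofLp p := by
  change (ContinuousMap.evalAlgHom ℝ ℝ θ).comp polyOnSphere p = _
  rw [polyOnSphere, comp_aeval, ← coe_aeval_eq_eval]
  rfl

theorem topologicalClosure_range_polyOnSphere :
    (polyOnSphere (d := d)).range.topologicalClosure = ⊤ := by
  refine ContinuousMap.subalgebra_topologicalClosure_eq_top_of_separatesPoints _ fun x y hxy => ?_
  obtain ⟨i, hi⟩ : ∃ i, x.val i ≠ y.val i := by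
    by_contra! h
    exact hxy (Subtype.ext (PiLp.ext h))
  refine ⟨_, ⟨polyOnSphere (X i), ⟨_, rfl⟩, rfl⟩, ?_⟩
  simpa only [polyOnSphere_apply, eval_X] using hi

/-- Polynomials on `ℝ^d` as square-integrable functions on the unit sphere. -/
def polyL2 : MvPolynomial (Fin d) ℝ →ₗ[ℝ] L²𝕊[d] :=
  (ContinuousMap.toLp 2 (sphMeasure d) ℝ : C(𝕊[d], ℝ) →L[ℝ] L²𝕊[d]).toLinearMap ∘ₗ
    polyOnSphere.toLinearMap

theorem dense_iUnion_map_polyL2 :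
    Dense (⋃ N, ((restrictTotalDegree (Fin d) ℝ N).map polyL2 : Set L²𝕊[d])) := by
  have hpoly : Dense ((polyOnSphere (d := d)).range : Set C(𝕊[d], ℝ)) := fun f => by
    rw [← Subalgebra.topologicalClosure_coe, topologicalClosure_range_polyOnSphere]
    trivial
  have hcont := ContinuousMap.toLp_denseRange ℝ (sphMeasure d) ℝ (p := 2) (by simp)
  refine (hcont.dense_image (ContinuousLinearMap.continuous _) hpoly).mono ?_
  rintro _ ⟨_, ⟨p, rfl⟩, rfl⟩
  exact Set.mem_iUnion.2 ⟨p.totalDegree, p, (mem_restrictTotalDegree _ _ _).2 le_rfl, rfl⟩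

theorem inner_toLp_sphMeasure (f g : C(𝕊[d], ℝ)) :
    ⟪ContinuousMap.toLp 2 (sphMeasure d) ℝ f, ContinuousMap.toLp 2 (sphMeasure d) ℝ g⟫ =
      ∫ θ, f θ * g θ ∂(sphMeasure d) := by
  simp only [ContinuousMap.inner_toLp, conj_trivial, mul_comm]

theorem inner_toLp_polyL2 (f : C(𝕊[d], ℝ)) (p : MvPolynomial (Fin d) ℝ) :
    ⟪ContinuousMap.toLp 2 (sphMeasure d) ℝ f, polyL2 p⟫ =
      ∫ θ, f θ * eval θ.val.ofLp p ∂(sphMeasure d) := by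
  simp only [← polyOnSphere_apply]
  exact inner_toLp_sphMeasure f (polyOnSphere p)

theorem inner_polyL2 (p q : MvPolynomial (Fin d) ℝ) :
    ⟪polyL2 p, polyL2 q⟫ =
      ∫ θ : 𝕊[d], eval θ.val.ofLp p * eval θ.val.ofLp q ∂(sphMeasure d) := by
  simp only [← polyOnSphere_apply p]
  exact inner_toLp_polyL2 (polyOnSphere p) q

theorem sphArea_pos [NeZero d] : 0 < sphArea d :=
  ENNReal.toReal_pos (Measure.measure_univ_ne_zero.2 (Measure.toSphere_ne_zero _))
    (measure_ne_top _ _)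

theorem SphSmooth.integral_sphLap_mul_eval [NeZero d] {F : 𝕊[d] → ℝ} (hF : SphSmooth F)
    (p : MvPolynomial (Fin d) ℝ) :
    ∫ θ : 𝕊[d], sphLap F θ * eval θ.val.ofLp p ∂(sphMeasure d) =
      ∫ θ : 𝕊[d], F θ * eval θ.val.ofLp (polySphLap p) ∂(sphMeasure d) := by
  rw [integral_sphLap_mul_comm hF (smoothOffZero_eval p).sphSmooth]
  simp only [sphLap_eval]

theorem isFilteredSymmetric_polySphLap [NeZero d] :
    IsFilteredSymmetric polyL2 polySphLap (restrictTotalDegree (Fin d) ℝ) (sphEigenvalue d) where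
  mono := monotone_restrictTotalDegree
  apply_eq_zero _ := polySphLap_eq_zero_of_mem
  apply_add_smul_mem _ _ := polySphLap_add_smul_mem
  inner_apply_left p q := by
    simp only [inner_polyL2, ← (smoothOffZero_eval p).sphSmooth.integral_sphLap_mul_eval q,
      sphLap_eval]

theorem SphSmooth.mul_integral_sq_le [NeZero d] {F : 𝕊[d] → ℝ} (hF : SphSmooth F) {a b : ℝ}
    (hb : 0 ≤ b)
    (hab : ∀ k, 0 ≤ sphEigenvalue d (k + 1) ^ 2 - a * sphEigenvalue d (k + 1) + b) :
    b * (∫ θ, F θ ∂(sphMeasure d)) ^ 2 ≤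
      (∫ θ, sphLap F θ ^ 2 ∂(sphMeasure d) + a * ∫ θ, F θ * sphLap F θ ∂(sphMeasure d) +
        b * ∫ θ, F θ ^ 2 ∂(sphMeasure d)) * sphArea d := by
  let f : C(𝕊[d], ℝ) := ⟨F, hF.continuous⟩
  let g : C(𝕊[d], ℝ) := ⟨sphLap F, hF.continuous_sphLap⟩
  have hone : (1 : MvPolynomial (Fin d) ℝ) ∈ restrictTotalDegree (Fin d) ℝ 0 := by
    rw [mem_restrictTotalDegree, totalDegree_one]
  have key := isFilteredSymmetric_polySphLap.mul_inner_sq_le dense_iUnion_map_polyL2 hb hab hone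
    (f := ContinuousMap.toLp 2 (sphMeasure d) ℝ f) (g := ContinuousMap.toLp 2 (sphMeasure d) ℝ g)
    fun p => by
      rw [inner_toLp_polyL2, inner_toLp_polyL2]
      exact hF.integral_sphLap_mul_eval p
  have hf : ⇑f = F := rfl
  have hg : ⇑g = sphLap F := rfl
  have harea : (sphMeasure d).real Set.univ = sphArea d := rfl
  simpa only [inner_toLp_polyL2, inner_polyL2, inner_toLp_sphMeasure, hf, hg, map_one, mul_one,
    ← sq, one_pow, integral_const, smul_eq_mul, harea] using key

end SpectralInequality

section MinkowskiDeficit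

-- The roots `d - 1` and `2 * d` of the quadratic are the consecutive eigenvalues `k = 1, 2`.
theorem quadratic_sphEigenvalue_nonneg (hd : 2 ≤ d) (k : ℕ) :
    0 ≤ sphEigenvalue d (k + 1) ^ 2 - (3 * d - 1) * sphEigenvalue d (k + 1) +
      2 * ((d : ℝ) - 1) * d := by
  have hd' : (2 : ℝ) ≤ d := by exact_mod_cast hd
  rw [show sphEigenvalue d (k + 1) ^ 2 - (3 * d - 1) * sphEigenvalue d (k + 1) +
      2 * ((d : ℝ) - 1) * d =
        (sphEigenvalue d (k + 1) - (d - 1)) * (sphEigenvalue d (k + 1) - 2 * d) by ring]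
  rcases k with _ | k
  · have hfirst : sphEigenvalue d (0 + 1) = d - 1 := by
      simp only [sphEigenvalue, Nat.cast_zero, Nat.cast_add, Nat.cast_one]
      ring
    rw [hfirst, sub_self, zero_mul]
  · have hsecond : 2 * (d : ℝ) ≤ sphEigenvalue d (k + 1 + 1) := by
      simp only [sphEigenvalue, Nat.cast_add, Nat.cast_one]
      nlinarith [(Nat.cast_nonneg k : (0 : ℝ) ≤ k)]
    exact mul_nonneg (by linarith) (by linarith)

variable {F : 𝕊[d] → ℝ}

theorem SphSmooth.integral_mul_sq_add_mul_sphLap (hF : SphSmooth F) (c : ℝ) :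
    ∫ θ, (c * F θ ^ 2 + F θ * sphLap F θ) ∂(sphMeasure d) =
      c * ∫ θ, F θ ^ 2 ∂(sphMeasure d) + ∫ θ, F θ * sphLap F θ ∂(sphMeasure d) := by
  have hcF := hF.continuous
  have hcL := hF.continuous_sphLap
  rw [integral_add (integrable_sphMeasure (by fun_prop)) (integrable_sphMeasure (by fun_prop)),
    integral_const_mul]

theorem SphSmooth.integral_add_sphLap_div_sq (hF : SphSmooth F) (c : ℝ) :
    ∫ θ, (F θ + sphLap F θ / c) ^ 2 ∂(sphMeasure d) =
      ∫ θ, F θ ^ 2 ∂(sphMeasure d) + 2 / c * ∫ θ, F θ * sphLap F θ ∂(sphMeasure d) +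
        1 / c ^ 2 * ∫ θ, sphLap F θ ^ 2 ∂(sphMeasure d) := by
  have hexpand (θ : 𝕊[d]) : (F θ + sphLap F θ / c) ^ 2 =
      F θ ^ 2 + 2 / c * (F θ * sphLap F θ) + 1 / c ^ 2 * sphLap F θ ^ 2 := by ring
  have hcF := hF.continuous
  have hcL := hF.continuous_sphLap
  simp only [hexpand]
  rw [integral_add (integrable_sphMeasure (by fun_prop)) (integrable_sphMeasure (by fun_prop)),
    integral_add (integrable_sphMeasure (by fun_prop)) (integrable_sphMeasure (by fun_prop)),
    integral_const_mul, integral_const_mul]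

theorem minkowski_deficit_upper_bound_general (hd : 2 ≤ d) (hF : SphSmooth F) :
    (1 / sphArea d) * (∫ θ, F θ ∂(sphMeasure d)) ^ 2 -
        (1 / ((d : ℝ) - 1)) *
          ∫ θ, (((d : ℝ) - 1) * F θ ^ 2 + F θ * sphLap F θ) ∂(sphMeasure d) ≤
      (((d : ℝ) - 1) / ((d : ℝ) + 1)) *
        (∫ θ, (F θ + sphLap F θ / ((d : ℝ) - 1)) ^ 2 ∂(sphMeasure d) -
          (1 / sphArea d) * (∫ θ, F θ ∂(sphMeasure d)) ^ 2) := by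
  have : NeZero d := ⟨by omega⟩
  have hd' : (2 : ℝ) ≤ d := by exact_mod_cast hd
  have hd₁ : 0 < (d : ℝ) - 1 := by linarith
  have hspectral := hF.mul_integral_sq_le (by positivity) (quadratic_sphEigenvalue_nonneg hd)
  rw [← div_le_iff₀ sphArea_pos] at hspectral
  rw [hF.integral_mul_sq_add_mul_sphLap, hF.integral_add_sphLap_div_sq, ← sub_nonneg]
  set I := ∫ θ, F θ ∂(sphMeasure d)
  set A := ∫ θ, F θ ^ 2 ∂(sphMeasure d)
  set B := ∫ θ, F θ * sphLap F θ ∂(sphMeasure d)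
  set C := ∫ θ, sphLap F θ ^ 2 ∂(sphMeasure d)
  have hdiff : ((d : ℝ) - 1) / (d + 1) *
        (A + 2 / (d - 1) * B + 1 / (d - 1) ^ 2 * C - 1 / sphArea d * I ^ 2) -
      (1 / sphArea d * I ^ 2 - 1 / (d - 1) * ((d - 1) * A + B)) =
      (C + (3 * d - 1) * B + 2 * (d - 1) * d * A - 2 * (d - 1) * d * I ^ 2 / sphArea d) /
        ((d - 1) * (d + 1)) := by
    have := (sphArea_pos (d := d)).ne'
    field_simp
    ring
  rw [hdiff]
  exact div_nonneg (sub_nonneg.2 hspectral) (by positivity)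

end MinkowskiDeficit

end Sphere

/-- stability/reverse form of the Minkowski inequality. If `Σ = ∂K` is a
closed convex hypersurface in `ℝ^d` bounding a smooth convex body `K`, then
`(1/|𝕊^{d-1}|)(∫_Σ H_{d-2})² − ∫_Σ H_{d-3} ≤ ((d-1)/(d+1)) [∫_Σ H_{d-2}²/H_{d-1} −
(1/|𝕊^{d-1}|)(∫_Σ H_{d-2})²]`. -/
theorem minkowski_deficit_upper_bound (d : ℕ) (hd : 2 ≤ d)
    (K : ConvexBody (EuclideanSpace ℝ (Fin d))) (hK : SmoothBody K) :
    (1 / sphArea d) * (intH2 K) ^ 2 - intH3 K ≤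
      (((d : ℝ) - 1) / ((d : ℝ) + 1)) *
        (intH2sq K - (1 / sphArea d) * (intH2 K) ^ 2) :=
  minkowski_deficit_upper_bound_general hd hK.sphSmooth_suppS
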